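/- Let G be a finitely presented group with quadratic Dehn function; that is, for some finite presentation of G there exists C ∈ ℕ with δ_G(n) ≤ C·n² for all n and n² ≤ C·δ_G(Cn) + Cn for all n. Then f_{G,X}(k,m,n) ∼ (n/m)² for any finite generating set X of G, where (n/m)² is regarded as an element of 𝓕 independent of k. -/

import Mathlib

open Function

namespace IsoSpecPaper

variable {ι : Type*} {G : Type*} [Group G]

/-- The (reduced) length of an element of a free group. -/
noncomputable def wnorm (w : FreeGroup ι) : ℕ :=
  @FreeGroup.norm ι (Classical.decEq ι) w

/-- `triv φ k` : the set of words of length at most `k` in the generators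
(and their inverses) representing the identity of `G` under the marking `φ`. -/
noncomputable def triv (φ : FreeGroup ι →* G) (k : ℕ) : Set (FreeGroup ι) :=
  {w | wnorm w ≤ k ∧ φ w = 1}

/-- `AreaLe R w l` : `w` is a product of `l` conjugates of elements of `R` or
their inverses in the free group. -/
def AreaLe (R : Set (FreeGroup ι)) (w : FreeGroup ι) (l : ℕ) : Prop :=
  ∃ L : List (FreeGroup ι × FreeGroup ι), L.length = l ∧
    (∀ p ∈ L, p.2 ∈ R ∨ p.2⁻¹ ∈ R) ∧
    w = (L.map fun p => p.1⁻¹ * p.2 * p.1).prod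

/-- The area of `w` with respect to the set of relators `R`. -/
noncomputable def area (R : Set (FreeGroup ι)) (w : FreeGroup ι) : ℕ :=
  sInf {l | AreaLe R w l}

/-- The isoperimetric spectrum of the marked group `(G, φ)`:
`isoSpec φ k m n = max { area_{S_m}(w) : w ∈ ⟪S_k⟫, ‖w‖ ≤ n }`. -/
noncomputable def isoSpec (φ : FreeGroup ι →* G) (k m n : ℕ) : ℕ :=
  sSup (area (triv φ m) '' {w | w ∈ Subgroup.normalClosure (triv φ k) ∧ wnorm w ≤ n})

/-- The real-valued isoperimetric spectrum. -/
noncomputable def isoSpecR (φ : FreeGroup ι →* G) : ℕ → ℕ → ℕ → ℝ :=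
  fun k m n => (isoSpec φ k m n : ℝ)

/-- The Dehn function of the presentation with relators `R`. -/
noncomputable def dehn (R : Set (FreeGroup ι)) (n : ℕ) : ℕ :=
  sSup (area R '' {w | w ∈ Subgroup.normalClosure R ∧ wnorm w ≤ n})

/-- The quasi-order `f ≼ g` on functions of triples `(k,m,n)` of positive integers
with `m ≥ k`. -/
def SpecLE (f g : ℕ → ℕ → ℕ → ℝ) : Prop :=
  ∃ C : ℕ, 0 < C ∧ ∀ k m n : ℕ, 0 < k → 0 < m → 0 < n → C * k ≤ m →
    f k (C * m) n ≤ C * g (C * k) m (C * n) + C * (n : ℝ) / m + C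

/-- Equivalence of isoperimetric functions: `f ∼ g`. -/
def SpecEquiv (f g : ℕ → ℕ → ℕ → ℝ) : Prop := SpecLE f g ∧ SpecLE g f

/-- The linear spectrum `(k,m,n) ↦ n/m`. -/
noncomputable def linSpec : ℕ → ℕ → ℕ → ℝ := fun _ m n => (n : ℝ) / m

/-- The word length of `g ∈ G` with respect to the marking `φ`. -/
noncomputable def wlen (φ : FreeGroup ι →* G) (g : G) : ℕ :=
  sInf {n | ∃ w : FreeGroup ι, wnorm w = n ∧ φ w = g}

/-- The word metric on `G` with respect to the marking `φ`. -/
noncomputable def wdist (φ : FreeGroup ι →* G) (g h : G) : ℕ := wlen φ (g⁻¹ * h)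

/-- Quasi-isometry of marked groups with respect to their word metrics. -/
noncomputable def QuasiIsometric {H : Type*} [Group H] {κ : Type*}
    (φ : FreeGroup ι →* G) (ψ : FreeGroup κ →* H) : Prop :=
  ∃ L : ℝ, 0 ≤ L ∧ ∃ (α : G → H) (β : H → G),
    (∀ x y : G, (wdist ψ (α x) (α y) : ℝ) ≤ L * wdist φ x y + L) ∧
    (∀ u v : H, (wdist φ (β u) (β v) : ℝ) ≤ L * wdist ψ u v + L) ∧
    (∀ t : H, (wdist ψ (α (β t)) t : ℝ) ≤ L) ∧
    (∀ s : G, (wdist φ (β (α s)) s : ℝ) ≤ L)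

/-- A (combinatorial) geodesic path of length `n` in the Cayley graph of `(G, φ)`:
consecutive vertices are at distance at most `1` and the endpoints are at
distance exactly `n`. -/
noncomputable def IsGeodesic (φ : FreeGroup ι →* G) {n : ℕ} (p : Fin (n + 1) → G) : Prop :=
  (∀ i : Fin n, wdist φ (p i.castSucc) (p i.succ) ≤ 1) ∧
  wdist φ (p 0) (p (Fin.last n)) = n

/-- Every vertex of the path `p` lies within distance `δ` of the set `A`. -/
noncomputable def ThinAt (φ : FreeGroup ι →* G) (δ : ℝ) {n : ℕ}
    (p : Fin (n + 1) → G) (A : Set G) : Prop :=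
  ∀ i, ∃ a ∈ A, (wdist φ (p i) a : ℝ) ≤ δ

/-- The Cayley graph of `(G, φ)` is `δ`-hyperbolic: every geodesic triangle is `δ`-thin. -/
noncomputable def HypConst (φ : FreeGroup ι →* G) (δ : ℝ) : Prop :=
  ∀ (n₁ n₂ n₃ : ℕ) (p : Fin (n₁ + 1) → G) (q : Fin (n₂ + 1) → G) (r : Fin (n₃ + 1) → G),
    IsGeodesic φ p → IsGeodesic φ q → IsGeodesic φ r →
    p (Fin.last n₁) = q 0 → q (Fin.last n₂) = r 0 → r (Fin.last n₃) = p 0 →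
    ThinAt φ δ p (Set.range q ∪ Set.range r) ∧
    ThinAt φ δ q (Set.range r ∪ Set.range p) ∧
    ThinAt φ δ r (Set.range p ∪ Set.range q)

/-- The marked group `(G, φ)` is hyperbolic. -/
noncomputable def IsHyperbolic (φ : FreeGroup ι →* G) : Prop :=
  ∃ δ : ℝ, 0 ≤ δ ∧ HypConst φ δ

/-- `G` (marked by `φ`) is a limit (direct limit) of hyperbolic groups. -/
noncomputable def LimitOfHyperbolic (φ : FreeGroup ι →* G) : Prop :=
  Surjective φ ∧ ∃ R : ℕ → Set (FreeGroup ι),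
    (∀ i j, i ≤ j → R i ⊆ R j) ∧
    φ.ker = Subgroup.normalClosure (⋃ i, R i) ∧
    ∀ i, IsHyperbolic (QuotientGroup.mk' (Subgroup.normalClosure (R i)))

/-- `G` (marked by `φ`) is well-approximated by hyperbolic groups. -/
noncomputable def WellApproximated (φ : FreeGroup ι →* G) : Prop :=
  Surjective φ ∧ ∃ R : ℕ → Set (FreeGroup ι),
    (∀ i j, i ≤ j → R i ⊆ R j) ∧
    φ.ker = Subgroup.normalClosure (⋃ i, R i) ∧
    (∀ i, IsHyperbolic (QuotientGroup.mk' (Subgroup.normalClosure (R i)))) ∧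
    ∃ C : ℕ, 0 < C ∧ ∀ i : ℕ, 0 < i →
      (∀ w : FreeGroup ι, wnorm w ≤ i → φ w = 1 →
        w ∈ Subgroup.normalClosure (R i)) ∧
      HypConst (QuotientGroup.mk' (Subgroup.normalClosure (R i))) ((C * i : ℕ) : ℝ)



section VanKampen

/-- Inverse letter. -/
def ilet (x : ι × Bool) : ι × Bool := (x.1, !x.2)

theorem ilet_ilet (x : ι × Bool) : ilet (ilet x) = x := by
  simp [ilet]

/-- `Fc φ M x t` : the letter `x` may be replaced by the path `t`. -/
def Fc (φ : FreeGroup ι →* G) (M : ℕ) (x : ι × Bool) (t : List (ι × Bool)) : Prop :=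
  t.length ≤ M ∧ φ (FreeGroup.mk [x]) = φ (FreeGroup.mk t)

/-- One step analysis of an edge. -/
def Good (φ : FreeGroup ι →* G) (M : ℕ) (S : List (ι × Bool) → ℕ → Prop)
    (x : ι × Bool) (v : List (ι × Bool)) (A : ℕ) : Prop :=
  (∃ u v' A1 A2, v = u ++ ilet x :: v' ∧ A1 + A2 ≤ A ∧ S u A1 ∧ S v' A2) ∨
  (∃ t B, A = B + 1 ∧ Fc φ M x t ∧ S (t ++ v) B)

/-- Consistency of a family of diagrams. -/
def Consis (φ : FreeGroup ι →* G) (M : ℕ) (S : List (ι × Bool) → ℕ → Prop) : Prop :=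
  ∀ p s x A, S (p ++ x :: s) A → Good φ M S x (s ++ p) A

/-- `Dg φ M w A` : the word `w` bounds a disc diagram of area at most `A`. -/
def Dg (φ : FreeGroup ι →* G) (M : ℕ) (w : List (ι × Bool)) (A : ℕ) : Prop :=
  ∃ S, Consis φ M S ∧ S w A

variable {φ : FreeGroup ι →* G} {M : ℕ}

theorem Good.mono {S T : List (ι × Bool) → ℕ → Prop} (h : ∀ w A, S w A → T w A)
    {x v A} (hg : Good φ M S x v A) : Good φ M T x v A := by
  rcases hg with ⟨u, v', A1, A2, h1, h2, h3, h4⟩ | ⟨t, A', h1, h2, h3⟩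
  · exact Or.inl ⟨u, v', A1, A2, h1, h2, h _ _ h3, h _ _ h4⟩
  · exact Or.inr ⟨t, A', h1, h2, h _ _ h3⟩

theorem Dg.consis (φ : FreeGroup ι →* G) (M : ℕ) : Consis φ M (Dg φ M) := by
  rintro p s x A ⟨S, hS, hw⟩
  exact (hS p s x A hw).mono fun w A h => ⟨S, hS, h⟩

/-- Coinduction principle. -/
theorem Dg.coind (S : List (ι × Bool) → ℕ → Prop)
    (h : ∀ p s x A, S (p ++ x :: s) A → Good φ M (fun w A => S w A ∨ Dg φ M w A) x (s ++ p) A)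
    {w A} (hw : S w A) : Dg φ M w A := by
  refine ⟨fun w A => S w A ∨ Dg φ M w A, ?_, Or.inl hw⟩
  rintro p s x A (h1 | h1)
  · exact h p s x A h1
  · exact (Dg.consis φ M p s x A h1).mono fun w A h => Or.inr h

theorem Dg.mono {w A B} (h : Dg φ M w A) (hAB : A ≤ B) : Dg φ M w B := by
  refine Dg.coind (fun w B => ∃ A ≤ B, Dg φ M w A) ?_ ⟨A, hAB, h⟩
  rintro p s x B ⟨A, hAB, h⟩
  rcases Dg.consis φ M p s x A h with ⟨u, v', A1, A2, h1, h2, h3, h4⟩ | ⟨t, A', h1, h2, h3⟩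
  · exact Or.inl ⟨u, v', A1, A2, h1, by omega, Or.inr h3, Or.inr h4⟩
  · exact Or.inr ⟨t, B - 1, by omega, h2, Or.inl ⟨A', by omega, h3⟩⟩

theorem split_at {β : Type*} {p s a b : List β} {x : β} (h : p ++ x :: s = a ++ b) :
    (∃ z, a = p ++ x :: z ∧ s = z ++ b) ∨ (∃ z, p = a ++ z ∧ b = z ++ x :: s) := by
  rcases List.append_eq_append_iff.1 h with ⟨z, rfl, hz⟩ | ⟨z, rfl, hz⟩
  · rcases z with _ | ⟨y, z⟩
    · exact Or.inr ⟨[], by simp, by simpa using hz.symm⟩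
    · simp only [List.cons_append, List.cons.injEq] at hz
      obtain ⟨rfl, rfl⟩ := hz
      exact Or.inl ⟨z, rfl, rfl⟩
  · exact Or.inr ⟨z, rfl, hz⟩

theorem Dg.rot {p s : List (ι × Bool)} {A} (h : Dg φ M (p ++ s) A) : Dg φ M (s ++ p) A := by
  refine Dg.coind (fun w A => ∃ p s, w = s ++ p ∧ Dg φ M (p ++ s) A) ?_ ⟨p, s, rfl, h⟩
  rintro p' s' x A ⟨p, s, h1, h⟩
  rcases split_at h1 with ⟨z, rfl, rfl⟩ | ⟨z, rfl, rfl⟩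
  · have := Dg.consis φ M (p ++ p') z x A (by simpa using h)
    simpa using this.mono fun w A h => Or.inr h
  · have := Dg.consis φ M z (s' ++ s) x A (by simpa using h)
    simpa using this.mono fun w A h => Or.inr h

theorem Dg.nil (A) : Dg φ M [] A := by
  refine Dg.coind (fun w A => w = []) ?_ rfl
  intro p s x A h
  simp at h

/-- Concatenation of diagrams. -/
theorem Dg.append {a c : List (ι × Bool)} {A B} (ha : Dg φ M a A) (hc : Dg φ M c B) :
    Dg φ M (a ++ c) (A + B) := by
  refine Dg.coind (fun w n => ∃ p s c A B, w = p ++ c ++ s ∧ n = A + B ∧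
    Dg φ M (p ++ s) A ∧ Dg φ M c B) ?_ ⟨a, [], c, A, B, by simp, rfl, by simpa using ha, hc⟩
  clear ha hc a c A B
  have key : ∀ p s c x A B, Dg φ M (p ++ x :: s) A → Dg φ M c B →
     Good φ M (fun w n => (∃ p s c A B, w = p ++ c ++ s ∧ n = A + B ∧
    Dg φ M (p ++ s) A ∧ Dg φ M c B) ∨ Dg φ M w n) x (s ++ c ++ p) (A + B) := by
    intro p s c x A B ha hc
    rcases Dg.consis φ M p s x A ha with ⟨u, v', A1, A2, h1, h2, h3, h4⟩ | ⟨t, A', h1, h2, h3⟩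
    · rcases split_at h1.symm with ⟨z, rfl, rfl⟩ | ⟨z, rfl, rfl⟩
      · exact Or.inl ⟨u, z ++ c ++ p, A1, A2 + B, by simp, by omega,
          Or.inr h3, Or.inl ⟨z, p, c, A2, B, by simp, rfl, h4, hc⟩⟩
      · exact Or.inl ⟨s ++ c ++ z, v', A1 + B, A2, by simp, by omega,
          Or.inl ⟨s, z, c, A1, B, rfl, rfl, h3, hc⟩, Or.inr h4⟩
    · exact Or.inr ⟨t, A' + B, by omega, h2, Or.inl ⟨t ++ s, p, c, A', B, by simp, rfl,
        by simpa using h3, hc⟩⟩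
  rintro p' s' x n ⟨p, s, c, A, B, h, rfl, ha, hc⟩
  rw [List.append_assoc] at h
  rcases split_at h with ⟨z, rfl, rfl⟩ | ⟨z, rfl, hz⟩
  · have := key (s ++ p') z c x A B
      (by simpa using Dg.rot (p := p' ++ x :: z) (s := s) (by simpa using ha)) hc
    simpa using this
  · rcases split_at hz.symm with ⟨y, rfl, rfl⟩ | ⟨y, rfl, rfl⟩
    · have := key z y (s ++ p) x B A (by simpa using hc) ha.rot
      rw [add_comm]
      simpa using this
    · have := key y (s' ++ p) c x A B
        (by simpa using Dg.rot (p := p) (s := y ++ x :: s') (by simpa using ha)) hc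
      simpa using this

/-- Deletion of a cancelling pair. -/
theorem Dg.del {y : ι × Bool} {a b : List (ι × Bool)} {A}
    (h : Dg φ M (a ++ y :: ilet y :: b) A) : Dg φ M (a ++ b) A := by
  refine Dg.coind (fun w A => ∃ y p s, w = p ++ s ∧ Dg φ M (p ++ y :: ilet y :: s) A) ?_
    ⟨y, a, b, rfl, h⟩
  clear h A a b y
  have key : ∀ x y e f A, Good φ M (Dg φ M) x (e ++ y :: ilet y :: f) A →
      Good φ M (fun w A => (∃ y p s, w = p ++ s ∧ Dg φ M (p ++ y :: ilet y :: s) A) ∨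
        Dg φ M w A) x (e ++ f) A := by
    intro x y e f A h
    rcases h with ⟨u, v', A1, A2, h1, h2, h3, h4⟩ | ⟨t, A', h1, h2, h3⟩
    · rcases split_at h1.symm with ⟨z, rfl, rfl⟩ | ⟨z, rfl, hz⟩
      · exact Or.inl ⟨u, z ++ f, A1, A2, by simp, h2, Or.inr h3, Or.inl ⟨y, z, f, rfl, h4⟩⟩
      · rcases z with _ | ⟨z0, z⟩
        · simp only [List.nil_append, List.cons.injEq] at hz
          obtain ⟨rfl, rfl⟩ := hz
          rw [ilet_ilet] at h4
          rw [List.append_nil] at h3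
          rcases Dg.consis φ M [] f x A2 h4 with
            ⟨u', v'', B1, B2, g1, g2, g3, g4⟩ | ⟨t, A', g1, g2, g3⟩
          · rw [List.append_nil] at g1
            subst g1
            exact Or.inl ⟨e ++ u', v'', A1 + B1, B2, by simp, by omega,
              Or.inr (h3.append g3), Or.inr g4⟩
          · refine Or.inr ⟨t, A - 1, by omega, g2, Or.inr ?_⟩
            have h5 := Dg.append h3 (Dg.rot g3)
            have h6 := Dg.rot (p := e ++ f) (s := t) (by simpa using h5)
            exact h6.mono (by omega)
        · simp only [List.cons_append, List.cons.injEq] at hz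
          obtain ⟨rfl, hz⟩ := hz
          rcases z with _ | ⟨z1, z⟩
          · simp only [List.nil_append, List.cons.injEq] at hz
            obtain ⟨hx, rfl⟩ := hz
            have hx : y = x := by rw [← ilet_ilet y, hx, ilet_ilet]
            subst hx
            rcases Dg.consis φ M e [] y A1 h3 with
              ⟨u', v'', B1, B2, g1, g2, g3, g4⟩ | ⟨t, A', g1, g2, g3⟩
            · rw [List.nil_append] at g1
              subst g1
              exact Or.inl ⟨u', v'' ++ f, B1, B2 + A2, by simp, by omega,
                Or.inr g3, Or.inr (g4.append h4)⟩
            · refine Or.inr ⟨t, A - 1, by omega, g2, Or.inr ?_⟩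
              have h5 := Dg.append g3 h4
              simp only [List.nil_append, List.append_assoc] at h5
              exact h5.mono (by omega)
          · simp only [List.cons_append, List.cons.injEq] at hz
            obtain ⟨rfl, rfl⟩ := hz
            exact Or.inl ⟨e ++ z, v', A1, A2, by simp, h2, Or.inl ⟨y, e, z, rfl, h3⟩, Or.inr h4⟩
    · exact Or.inr ⟨t, A', h1, h2, Or.inl ⟨y, t ++ e, f, by simp, by simpa using h3⟩⟩
  rintro p s x A ⟨y, p0, s0, h0, h⟩
  rcases split_at h0 with ⟨z, rfl, rfl⟩ | ⟨z, rfl, rfl⟩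
  · have := key x y z (s0 ++ p) A
      (by simpa using Dg.consis φ M p (z ++ y :: ilet y :: s0) x A (by simpa using h))
    simpa using this
  · have := key x y (s ++ p0) z A
      (by simpa using Dg.consis φ M (p0 ++ y :: ilet y :: z) s x A (by simpa using h))
    simpa using this

theorem Dg.pair (y : ι × Bool) : Dg φ M [y, ilet y] 0 := by
  refine Dg.coind (fun w A => ∃ y, w = [y, ilet y]) ?_ ⟨y, rfl⟩
  rintro p s x A ⟨y, h⟩
  left
  rcases p with _ | ⟨p0, p⟩
  · simp only [List.nil_append, List.cons.injEq] at h
    obtain ⟨rfl, rfl⟩ := h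
    exact ⟨[], [], 0, 0, rfl, by omega, Or.inr (Dg.nil _), Or.inr (Dg.nil _)⟩
  · simp only [List.cons_append, List.cons.injEq] at h
    obtain ⟨rfl, h⟩ := h
    rcases p with _ | ⟨p1, p⟩
    · simp only [List.nil_append, List.cons.injEq] at h
      obtain ⟨rfl, rfl⟩ := h
      exact ⟨[], [], 0, 0, by simp [ilet_ilet], by omega, Or.inr (Dg.nil _), Or.inr (Dg.nil _)⟩
    · simp at h

/-- Insertion of a diagram. -/
theorem Dg.ins {a b c : List (ι × Bool)} {A B} (h : Dg φ M (a ++ b) A) (hc : Dg φ M c B) :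
    Dg φ M (a ++ c ++ b) (A + B) := by
  have := Dg.append h.rot hc
  rw [List.append_assoc] at this
  exact this.rot

theorem Dg.step {l l' : List (ι × Bool)} {A} (h : FreeGroup.Red.Step l l') :
    Dg φ M l A ↔ Dg φ M l' A := by
  cases h with
  | @not L1 L2 x b =>
    constructor
    · intro h
      exact Dg.del (y := (x, b)) h
    · intro h
      simpa [ilet] using Dg.ins h (Dg.pair (x, b))

theorem Dg.red {l l' : List (ι × Bool)} {A} (h : FreeGroup.Red l l') :
    Dg φ M l A ↔ Dg φ M l' A := by
  induction h with
  | refl => rfl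
  | tail _ h ih => exact ih.trans (Dg.step h)

theorem Dg.congr {l l' : List (ι × Bool)} {A} (h : FreeGroup.mk l = FreeGroup.mk l') :
    Dg φ M l A ↔ Dg φ M l' A := by
  obtain ⟨c, h1, h2⟩ := FreeGroup.Red.exact.1 h
  exact (Dg.red h1).trans (Dg.red h2).symm

theorem Dg.of_one {l : List (ι × Bool)} (h : FreeGroup.mk l = 1) (A) : Dg φ M l A :=
  (Dg.congr (l' := []) (by rw [h]; rfl)).2 (Dg.nil A)

theorem Dg.rel {r : List (ι × Bool)} (h : φ (FreeGroup.mk r) = 1) (hr : r.length ≤ M + 1) :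
    Dg φ M r 1 := by
  refine Dg.coind (fun w A => A = 1 ∧ φ (FreeGroup.mk w) = 1 ∧ w.length ≤ M + 1) ?_ ⟨rfl, h, hr⟩
  rintro p s x A ⟨rfl, h, hr⟩
  right
  refine ⟨FreeGroup.invRev (s ++ p), 0, rfl, ⟨?_, ?_⟩, Or.inr (Dg.of_one ?_ _)⟩
  · simp at hr ⊢
    omega
  · have e : FreeGroup.mk (p ++ x :: s) = FreeGroup.mk p * FreeGroup.mk [x] * FreeGroup.mk s := by
      simp [FreeGroup.mul_mk]
    rw [e] at h
    rw [← FreeGroup.inv_mk, ← FreeGroup.mul_mk]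
    simp only [map_mul, map_inv] at h ⊢
    rw [mul_inv_rev, eq_inv_mul_iff_mul_eq, eq_inv_iff_mul_eq_one]
    exact h
  · rw [← FreeGroup.mul_mk, ← FreeGroup.inv_mk, inv_mul_cancel]

theorem Dg.closed {l : List (ι × Bool)} {A} (h : Dg φ M l A) : φ (FreeGroup.mk l) = 1 := by
  induction A using Nat.strong_induction_on generalizing l with
  | _ A ihA =>
  induction hn : l.length using Nat.strong_induction_on generalizing l A with
  | _ n ihn =>
  subst hn
  rcases l with _ | ⟨x, v⟩
  · exact map_one φ
  have hi : FreeGroup.mk [ilet x] = (FreeGroup.mk [x])⁻¹ := by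
    simp [FreeGroup.inv_mk, FreeGroup.invRev, ilet]
  rcases Dg.consis φ M [] v x A h with ⟨u, v', A1, A2, h1, h2, h3, h4⟩ | ⟨t, A', h1, h2, h3⟩
  · rw [List.append_nil] at h1
    subst h1
    have e : FreeGroup.mk (x :: (u ++ ilet x :: v')) =
        FreeGroup.mk [x] * FreeGroup.mk u * FreeGroup.mk [ilet x] * FreeGroup.mk v' := by
      simp [FreeGroup.mul_mk]
    have a1 := ihn u.length (by simp) A (fun B hB l h => ihA B hB h)
      (h3.mono (by omega)) rfl
    have a2 := ihn v'.length (by simp; omega) A (fun B hB l h => ihA B hB h)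
      (h4.mono (by omega)) rfl
    rw [e, hi, map_mul, map_mul, map_mul, a1, a2, map_inv]
    group
  · have := ihA A' (by omega) h3
    rw [List.append_nil, ← FreeGroup.mul_mk, map_mul, ← h2.2, ← map_mul, FreeGroup.mul_mk] at this
    exact this

theorem wnorm_mk_le (l : List (ι × Bool)) : wnorm (FreeGroup.mk l) ≤ l.length := by
  classical
  exact @FreeGroup.norm_mk_le ι l (Classical.decEq ι)

theorem wnorm_inv (w : FreeGroup ι) : wnorm w⁻¹ = wnorm w :=
  @FreeGroup.norm_inv_eq ι (Classical.decEq ι) w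

theorem wnorm_mul_le (w v : FreeGroup ι) : wnorm (w * v) ≤ wnorm w + wnorm v :=
  @FreeGroup.norm_mul_le ι (Classical.decEq ι) w v

theorem wnorm_one : wnorm (1 : FreeGroup ι) = 0 :=
  @FreeGroup.norm_one ι (Classical.decEq ι)

theorem exists_word (w : FreeGroup ι) : ∃ l, FreeGroup.mk l = w ∧ l.length = wnorm w :=
  ⟨@FreeGroup.toWord ι (Classical.decEq ι) w, @FreeGroup.mk_toWord ι (Classical.decEq ι) w, rfl⟩

theorem Dg.of_area {R : Set (FreeGroup ι)} (hR : ∀ r ∈ R, wnorm r ≤ M + 1 ∧ φ r = 1)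
    {w : FreeGroup ι} {A : ℕ} (h : AreaLe R w A) {l : List (ι × Bool)}
    (hl : FreeGroup.mk l = w) : Dg φ M l A := by
  obtain ⟨L, rfl, hL, rfl⟩ := h
  induction L generalizing l with
  | nil => exact Dg.of_one (by simpa using hl) _
  | cons p L ih =>
    simp only [List.map_cons, List.prod_cons] at hl
    obtain ⟨f, hf, -⟩ := exists_word p.1
    obtain ⟨r, hr, hr'⟩ := exists_word p.2
    obtain ⟨t, ht, -⟩ := exists_word (L.map fun p => p.1⁻¹ * p.2 * p.1).prod
    have h1 := ih (fun q hq => hL q (List.mem_cons_of_mem _ hq)) ht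
    have h2 : Dg φ M r 1 := by
      refine Dg.rel ?_ ?_
      · rw [hr]
        rcases hL p List.mem_cons_self with h | h
        · exact (hR _ h).2
        · simpa using (hR _ h).2
      · rw [hr']
        rcases hL p List.mem_cons_self with h | h
        · exact (hR _ h).1
        · have := (hR _ h).1
          rw [wnorm_inv] at this
          exact this
    have h3 : Dg φ M (FreeGroup.invRev f ++ f) 0 := Dg.of_one (by
      rw [← FreeGroup.mul_mk, ← FreeGroup.inv_mk, inv_mul_cancel]) _
    have h4 := (h3.ins h2).append h1
    have h5 : FreeGroup.mk l = FreeGroup.mk (FreeGroup.invRev f ++ r ++ f ++ t) := by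
      rw [hl]
      simp only [← FreeGroup.mul_mk, ← FreeGroup.inv_mk, hf, hr, ht]
    rw [Dg.congr h5]
    exact h4.mono (by simp; omega)

end VanKampen


section Polygons

/-- Area at most `k`. -/
def Ar (S : Set (FreeGroup ι)) (w : FreeGroup ι) (k : ℕ) : Prop :=
  ∃ l ≤ k, AreaLe S w l

variable {S : Set (FreeGroup ι)}

theorem Ar.mono {w : FreeGroup ι} {k k' : ℕ} (h : Ar S w k) (hk : k ≤ k') : Ar S w k' := by
  obtain ⟨l, hl, h⟩ := h
  exact ⟨l, hl.trans hk, h⟩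

theorem Ar.one (k : ℕ) : Ar S 1 k := ⟨0, Nat.zero_le _, [], rfl, by simp, by simp⟩

theorem Ar.mul {w v : FreeGroup ι} {k k' : ℕ} (h : Ar S w k) (h' : Ar S v k') :
    Ar S (w * v) (k + k') := by
  obtain ⟨_, hl, L, rfl, h1, h2⟩ := h
  obtain ⟨_, hl', L', rfl, h1', h2'⟩ := h'
  refine ⟨_, add_le_add hl hl', L ++ L', by simp, ?_, by simp [h2, h2']⟩
  intro p hp
  rcases List.mem_append.1 hp with h | h
  · exact h1 p h
  · exact h1' p h

theorem Ar.conj {w : FreeGroup ι} {k : ℕ} (h : Ar S w k) (g : FreeGroup ι) :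
    Ar S (g * w * g⁻¹) k := by
  obtain ⟨_, hl, L, rfl, h1, h2⟩ := h
  refine ⟨_, hl, L.map fun p => (p.1 * g⁻¹, p.2), by simp, ?_, ?_⟩
  · intro p hp
    obtain ⟨q, hq, rfl⟩ := List.mem_map.1 hp
    exact h1 q hq
  · rw [h2]
    clear h1 h2 hl
    induction L with
    | nil => simp
    | cons p L ih =>
      simp only [List.map_cons, List.prod_cons]
      rw [← ih]
      simp only [mul_inv_rev, inv_inv]
      group

theorem Ar.of_mem {w : FreeGroup ι} (h : w ∈ S) : Ar S w 1 :=
  ⟨1, le_rfl, [(1, w)], rfl, by simp [h], by simp⟩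

/-- A system of antisymmetric geodesic words. -/
structure IsGeo (φ : FreeGroup ι →* G) (geo : G → G → FreeGroup ι) : Prop where
  refl : ∀ c, geo c c = 1
  symm : ∀ c d, geo d c = (geo c d)⁻¹
  map : ∀ c d, φ (geo c d) = c⁻¹ * d
  min : ∀ c d w, c * φ w = d → wnorm (geo c d) ≤ wnorm w

theorem exists_geo (φ : FreeGroup ι →* G) (hφ : Surjective φ) : ∃ geo, IsGeo φ geo := by
  classical
  have h : ∀ g : G, ∃ w, φ w = g ∧ ∀ v, φ v = g → wnorm w ≤ wnorm v := by
    intro g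
    obtain ⟨w, hw, hmin⟩ := WellFounded.has_min (measure (wnorm (ι := ι))).wf {w | φ w = g} (hφ g)
    exact ⟨w, hw, fun v hv => not_lt.1 (hmin v hv)⟩
  choose mw h1 h2 using h
  refine ⟨fun c d => if c = d then 1 else if WellOrderingRel c d then mw (c⁻¹ * d)
    else (mw (d⁻¹ * c))⁻¹, ?_, ?_, ?_, ?_⟩
  · intro c
    simp
  · intro c d
    by_cases e : c = d
    · simp [e]
    · have e' : ¬ d = c := fun h => e h.symm
      simp only [e, e', if_false]
      rcases trichotomous_of WellOrderingRel c d with h | h | h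
      · have h' : ¬ WellOrderingRel d c := fun h' => asymm_of WellOrderingRel h h'
        simp [h, h']
      · exact absurd h e
      · have h' : ¬ WellOrderingRel c d := fun h' => asymm_of WellOrderingRel h h'
        simp [h, h']
  · intro c d
    split_ifs with e h
    · simp [e]
    · exact h1 _
    · rw [map_inv, h1]
      group
  · intro c d w hw
    split_ifs with e h
    · simp [wnorm_one]
    · exact h2 _ _ (by rw [← hw]; group)
    · rw [wnorm_inv, ← wnorm_inv w]
      exact h2 _ _ (by rw [← hw, map_inv]; group)

/-- Product of geodesics along a list of points. -/
def pp (geo : G → G → FreeGroup ι) : List G → FreeGroup ι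
  | [] => 1
  | [_] => 1
  | c :: d :: l => geo c d * pp geo (d :: l)

open Classical in
/-- Number of changes along a list. -/
noncomputable def ch : List G → ℕ
  | [] => 0
  | [_] => 0
  | c :: d :: l => (if c = d then 0 else 1) + ch (d :: l)

/-- Closing up a list. -/
def cl : List G → List G
  | [] => []
  | c :: l => c :: (l ++ [c])

variable {φ : FreeGroup ι →* G} {geo : G → G → FreeGroup ι}

theorem pp_append (U V : List G) (c : G) :
    pp geo (U ++ c :: V) = pp geo (U ++ [c]) * pp geo (c :: V) := by
  induction U with
  | nil => simp [pp]
  | cons d U ih =>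
    rcases U with _ | ⟨e, U⟩
    · simp [pp]
    · simp only [List.cons_append, pp] at ih ⊢
      rw [ih, mul_assoc]

theorem ch_append (U V : List G) (c : G) :
    ch (U ++ c :: V) = ch (U ++ [c]) + ch (c :: V) := by
  induction U with
  | nil => simp [ch]
  | cons d U ih =>
    rcases U with _ | ⟨e, U⟩
    · simp [ch]
    · simp only [List.cons_append, ch] at ih ⊢
      rw [ih, add_assoc]

/-- The cost function. -/
def fc (q : ℕ) : ℕ := 3 * (q - 2)

/-- The polygon bound. -/
def Bd (geo : G → G → FreeGroup ι) (S : Set (FreeGroup ι)) (l : List G) (K : ℕ) : Prop :=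
  Ar S (pp geo (cl l)) (fc (ch (cl l)) + K)

theorem Bd.nil (K) : Bd geo S [] K := by
  simpa [Bd, cl, pp] using Ar.one _

theorem Bd.rot {p s : List G} {K} (h : Bd geo S (p ++ s) K) : Bd geo S (s ++ p) K := by
  rcases p with _ | ⟨c, p⟩
  · simpa using h
  rcases s with _ | ⟨d, s⟩
  · simpa using h
  have e1 : cl (c :: p ++ d :: s) = (c :: p) ++ d :: (s ++ [c]) := by simp [cl]
  have e2 : cl (d :: s ++ c :: p) = (d :: s) ++ c :: (p ++ [d]) := by simp [cl]
  unfold Bd at h ⊢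
  rw [e1, pp_append, ch_append] at h
  rw [e2, pp_append, ch_append]
  have := h.conj (pp geo (c :: p ++ [d]))⁻¹
  simp only [List.cons_append] at this ⊢
  rw [add_comm (ch _)]
  convert this using 1
  group

theorem ch_pos {l : List G} {d e : G} (h : d ≠ e) : 1 ≤ ch (d :: (l ++ [e])) := by
  induction l generalizing d with
  | nil => simp [ch, h]
  | cons c l ih =>
    simp only [List.cons_append, ch]
    by_cases hc : d = c
    · subst hc
      have := ih h
      omega
    · simp [hc]

theorem Bd.del (hg : IsGeo φ geo) {l : List G} {K : ℕ} {c : G} (h : Bd geo S l K)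
    (htri : ∀ d ∈ l.head?, ∀ e ∈ l.getLast?, Ar S (geo c d * geo d e * geo e c) 1) :
    Bd geo S (c :: l) K := by
  rcases List.eq_nil_or_concat l with rfl | ⟨L, e, rfl⟩
  · simp only [Bd, cl, List.nil_append, pp, hg.refl, mul_one]
    exact Ar.one _
  simp only [List.concat_eq_append] at h htri ⊢
  obtain ⟨d, L', hL'⟩ : ∃ d L', L ++ [e] = d :: L' := by
    rcases L with _ | ⟨d, L⟩
    · exact ⟨e, [], rfl⟩
    · exact ⟨d, L ++ [e], rfl⟩
  have htri := htri d (by simp [hL']) e (by simp)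
  have a1 : cl (L ++ [e]) = L ++ e :: [d] := by
    rw [hL']; simp only [cl]; rw [← List.cons_append, ← hL']; simp
  have a2 : cl (c :: (L ++ [e])) = c :: (L ++ e :: [c]) := by simp [cl]
  have p2 : pp geo (c :: (L ++ e :: [c])) = geo c d * pp geo (L ++ [e]) * geo e c := by
    rw [← List.cons_append, pp_append, List.cons_append, hL']
    simp [pp, ← hL']
  have c2 : ch (c :: (L ++ e :: [c])) = (ch [c, d]) + ch (L ++ [e]) + ch [e, c] := by
    rw [← List.cons_append, ch_append, List.cons_append, hL']
    simp [ch]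
  unfold Bd at h ⊢
  rw [a1, pp_append, ch_append] at h
  rw [a2, p2, c2]
  simp only [pp, mul_one, ch] at h ⊢
  have key := h.conj (geo c d)
  have heq : geo c d * pp geo (L ++ [e]) * geo e c =
    (geo c d * (pp geo (L ++ [e]) * geo e d) * (geo c d)⁻¹) * (geo c d * geo d e * geo e c) := by
    rw [hg.symm e d]
    group
  rw [heq]
  by_cases h1 : c = d
  · subst h1
    have : geo c c * geo c e * geo e c = 1 := by rw [hg.refl, hg.symm c e]; group
    rw [this, mul_one]
    exact key.mono (by simp)
  by_cases h2 : e = c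
  · subst h2
    have : geo e d * geo d e * geo e e = 1 := by rw [hg.refl, hg.symm d e]; group
    rw [this, mul_one]
    refine key.mono ?_
    simp [h1, add_comm]
  by_cases h3 : e = d
  · subst h3
    have : geo c e * geo e e * geo e c = 1 := by rw [hg.refl, hg.symm e c]; group
    rw [this, mul_one]
    refine key.mono ?_
    simp [h1, h2, fc]
  · have h4 : 1 ≤ ch (L ++ [e]) := by
      rcases L with _ | ⟨f, L⟩
      · simp at hL'
        exact absurd hL'.1 h3
      · simp at hL'
        rw [hL'.1]
        exact ch_pos (fun h => h3 h.symm)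
    refine (key.mul htri).mono ?_
    simp [h1, h2, h3, fc]
    omega

theorem Bd.chord (hg : IsGeo φ geo) {U V : List G} {c d : G} {K K' : ℕ}
    (h : Bd geo S (c :: (U ++ [d])) K) (h' : Bd geo S (d :: (V ++ [c])) K') :
    Bd geo S (c :: (U ++ d :: V)) (K + K') := by
  have a1 : cl (c :: (U ++ [d])) = (c :: U) ++ d :: [c] := by simp [cl]
  have a2 : cl (d :: (V ++ [c])) = (d :: V) ++ c :: [d] := by simp [cl]
  have a3 : cl (c :: (U ++ d :: V)) = (c :: U) ++ d :: (V ++ [c]) := by simp [cl]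
  unfold Bd at h h' ⊢
  rw [a1, pp_append, ch_append] at h
  rw [a2, pp_append, ch_append] at h'
  rw [a3, pp_append, ch_append]
  have key := h.mul (h'.conj (geo c d))
  simp only [pp, mul_one, ch, List.cons_append] at key ⊢
  convert key.mono ?_ using 1
  · rw [hg.symm c d]
    group
  · by_cases hcd : c = d
    · subst hcd
      simp [fc]
      omega
    · have h1 := ch_pos (l := U) hcd
      have h2 := ch_pos (l := V) (fun h => hcd h.symm)
      have hdc : ¬ d = c := fun h => hcd h.symm
      simp [hcd, hdc, fc]
      omega

theorem pp_ch_one (hg : IsGeo φ geo) {l : List G} {c d : G} (h : ch (c :: (l ++ [d])) ≤ 1) :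
    pp geo (c :: (l ++ [d])) = geo c d := by
  induction l generalizing c with
  | nil => simp [pp]
  | cons e l ih =>
    simp only [List.cons_append, ch, pp] at h ⊢
    by_cases hc : c = e
    · subst hc
      rw [ih (by simpa using h), hg.refl, one_mul]
    · rw [ih (by omega)]
      have : e = d := by
        by_contra hed
        have := ch_pos (l := l) hed
        simp [hc] at h
        omega
      rw [this, hg.refl, mul_one]

theorem pp_ch_two (hg : IsGeo φ geo) {l : List G} {c : G} (h : ch (c :: (l ++ [c])) ≤ 2) :
    pp geo (c :: (l ++ [c])) = 1 := by
  induction l with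
  | nil => simp [pp, hg.refl]
  | cons e l ih =>
    simp only [List.cons_append, ch, pp] at h ⊢
    by_cases hc : c = e
    · subst hc
      rw [ih (by simpa using h), hg.refl, one_mul]
    · simp only [hc, if_false] at h
      rw [pp_ch_one hg (by omega), hg.symm c e, mul_inv_cancel]

theorem Bd.rep (hg : IsGeo φ geo) {l : List G} {K : ℕ} {c : G} (k : ℕ)
    (h : Bd geo S (List.replicate k c ++ l) K)
    (htri : ∀ d ∈ l.head?, ∀ e ∈ l.getLast?, Ar S (geo c d * geo d e * geo e c) 1) :
    Bd geo S (c :: l) K := by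
  induction k with
  | zero => exact h.del hg htri
  | succ k ih =>
    rcases k with _ | k
    · simpa using h
    · apply ih
      simp only [List.replicate_succ, List.cons_append, Bd, cl, pp, ch] at h ⊢
      simpa [hg.refl] using h

end Polygons

section Loops

variable {β β' : Type*}

/-- Edge-labelled paths starting at `g` satisfying `P` at the start of each edge. -/
def Val (φ : FreeGroup ι →* G) (P : G → β → Prop) : G → List ((ι × Bool) × β) → Prop
  | _, [] => True
  | g, e :: l => P g e.2 ∧ Val φ P (g * φ (FreeGroup.mk [e.1])) l

variable {φ : FreeGroup ι →* G} {geo : G → G → FreeGroup ι} {S : Set (FreeGroup ι)}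

theorem mk_cons (x : ι × Bool) (l : List (ι × Bool)) :
    FreeGroup.mk (x :: l) = FreeGroup.mk [x] * FreeGroup.mk l := by
  rw [FreeGroup.mul_mk]; rfl

theorem mk_append (l l' : List (ι × Bool)) :
    FreeGroup.mk (l ++ l') = FreeGroup.mk l * FreeGroup.mk l' := by
  rw [FreeGroup.mul_mk]

theorem Val.append_iff {P : G → β → Prop} {g : G} {l l' : List ((ι × Bool) × β)} :
    Val φ P g (l ++ l') ↔
      Val φ P g l ∧ Val φ P (g * φ (FreeGroup.mk (l.map Prod.fst))) l' := by
  induction l generalizing g with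
  | nil => simp [Val, ← FreeGroup.one_eq_mk]
  | cons e l ih =>
    simp only [List.cons_append, Val, ih, List.map_cons]
    rw [mk_cons e.1 (l.map Prod.fst), map_mul, mul_assoc, and_assoc]

theorem Val.mono {P Q : G → β → Prop} (h : ∀ g b, P g b → Q g b) {g : G}
    {l : List ((ι × Bool) × β)} (hl : Val φ P g l) : Val φ Q g l := by
  induction l generalizing g with
  | nil => trivial
  | cons e l ih => exact ⟨h _ _ hl.1, ih hl.2⟩

theorem Val.and {P Q : G → β → Prop} {g : G}
    {l : List ((ι × Bool) × β)} (hl : Val φ P g l) (hl' : Val φ Q g l) :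
    Val φ (fun g b => P g b ∧ Q g b) g l := by
  induction l generalizing g with
  | nil => trivial
  | cons e l ih => exact ⟨⟨hl.1, hl'.1⟩, ih hl.2 hl'.2⟩

theorem Val.map_iff {P : G → β' → Prop} {f : β → β'} {g : G}
    {l : List ((ι × Bool) × β)} :
    Val φ P g (l.map fun e => (e.1, f e.2)) ↔ Val φ (fun g b => P g (f b)) g l := by
  induction l generalizing g with
  | nil => simp [Val]
  | cons e l ih => simp [Val, ih]

/-- `c` is at distance at most `b` from `g`. -/
def Near (φ : FreeGroup ι →* G) (b : ℕ) (g c : G) : Prop := ∃ w, wnorm w ≤ b ∧ g * φ w = c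

theorem Near.mono {b b' : ℕ} {g c : G} (h : Near φ b g c) (hb : b ≤ b') : Near φ b' g c := by
  obtain ⟨w, h1, h2⟩ := h
  exact ⟨w, h1.trans hb, h2⟩

theorem Near.move {b : ℕ} {g c : G} (h : Near φ b g c) (t : List (ι × Bool)) :
    Near φ (b + t.length) (g * φ (FreeGroup.mk t)) c := by
  obtain ⟨w, h1, h2⟩ := h
  refine ⟨(FreeGroup.mk t)⁻¹ * w, ?_, by rw [← h2, map_mul, map_inv]; group⟩
  have := wnorm_mul_le (FreeGroup.mk t)⁻¹ w
  rw [wnorm_inv] at this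
  have := wnorm_mk_le t
  omega

theorem Near.back {b : ℕ} {g c : G} {x : ι × Bool} (h : Near φ b (g * φ (FreeGroup.mk [x])) c) :
    Near φ (b + 1) g c := by
  obtain ⟨w, h1, h2⟩ := h
  refine ⟨FreeGroup.mk [x] * w, ?_, by rw [← h2, map_mul]; group⟩
  have := wnorm_mul_le (FreeGroup.mk [x]) w
  have := wnorm_mk_le [x]
  simp at this
  omega

theorem Near.gle (hg : IsGeo φ geo) {b b' : ℕ} {g c d : G} (h : Near φ b g c)
    (h' : Near φ b' g d) : wnorm (geo c d) ≤ b + b' := by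
  obtain ⟨w, h1, rfl⟩ := h
  obtain ⟨v, h2, rfl⟩ := h'
  refine (hg.min _ _ (w⁻¹ * v) (by rw [map_mul, map_inv]; group)).trans ?_
  have := wnorm_mul_le w⁻¹ v
  rw [wnorm_inv] at this
  omega

theorem Ar.quad (hg : IsGeo φ geo) {T : ℕ} (hS : ∀ w, φ w = 1 → wnorm w ≤ 8 * T → w ∈ S)
    {g a b c d : G} (ha : Near φ T g a) (hb : Near φ T g b) (hc : Near φ T g c)
    (hd : Near φ T g d) : Ar S (geo a b * geo b c * geo c d * geo d a) 1 := by
  apply Ar.of_mem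
  apply hS
  · simp only [map_mul, hg.map]; group
  · have h1 := ha.gle hg hb
    have h2 := hb.gle hg hc
    have h3 := hc.gle hg hd
    have h4 := hd.gle hg ha
    have h5 := wnorm_mul_le (geo a b * geo b c * geo c d) (geo d a)
    have h6 := wnorm_mul_le (geo a b * geo b c) (geo c d)
    have h7 := wnorm_mul_le (geo a b) (geo b c)
    omega

theorem Ar.tri (hg : IsGeo φ geo) {T : ℕ} (hS : ∀ w, φ w = 1 → wnorm w ≤ 8 * T → w ∈ S)
    {g a b c : G} (ha : Near φ T g a) (hb : Near φ T g b) (hc : Near φ T g c) :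
    Ar S (geo a b * geo b c * geo c a) 1 := by
  have := Ar.quad hg hS ha hb hc hc
  rwa [hg.refl, mul_one] at this

theorem Val.head {f : β → G} {N : ℕ} {g : G} {l : List ((ι × Bool) × β)}
    (h : Val φ (fun g b => Near φ N g (f b)) g l) {d : G}
    (hd : d ∈ (l.map fun e => f e.2).head?) : Near φ N g d := by
  rcases l with _ | ⟨e, l⟩
  · simp at hd
  · simp at hd
    exact hd ▸ h.1

theorem Val.last {f : β → G} {N : ℕ} {g : G} {l : List ((ι × Bool) × β)}
    (h : Val φ (fun g b => Near φ N g (f b)) g l) {d : G}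
    (hd : d ∈ (l.map fun e => f e.2).getLast?) :
    Near φ (N + 1) (g * φ (FreeGroup.mk (l.map Prod.fst))) d := by
  rcases List.eq_nil_or_concat l with rfl | ⟨l, e, rfl⟩
  · simp at hd
  · simp only [List.concat_eq_append] at h hd ⊢
    simp at hd
    rw [Val.append_iff] at h
    have := h.2.1.move [e.1]
    simp only [List.length_singleton] at this
    rw [hd] at this
    rw [List.map_append, mk_append, map_mul, ← mul_assoc]
    simpa using this

theorem ladder (hg : IsGeo φ geo) {T N : ℕ} (hS : ∀ w, φ w = 1 → wnorm w ≤ 8 * T → w ∈ S)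
    (hN : N + 1 ≤ T) {c d : β → G} (l : List ((ι × Bool) × β)) (e e' : (ι × Bool) × β) (g : G)
    (h : Val φ (fun g b => Near φ N g (c b) ∧ Near φ N g (d b)) g (e :: (l ++ [e']))) :
    Ar S (pp geo ((e :: (l ++ [e'])).map fun e => c e.2) * geo (c e'.2) (d e'.2) *
      (pp geo ((e :: (l ++ [e'])).map fun e => d e.2))⁻¹ * (geo (c e.2) (d e.2))⁻¹)
      (ch ((e :: (l ++ [e'])).map fun e => c e.2) + ch ((e :: (l ++ [e'])).map fun e => d e.2)) := by
  have step : ∀ (e f : (ι × Bool) × β) (g : G), (Near φ N g (c e.2) ∧ Near φ N g (d e.2)) →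
      (Near φ N (g * φ (FreeGroup.mk [e.1])) (c f.2) ∧
        Near φ N (g * φ (FreeGroup.mk [e.1])) (d f.2)) →
      Ar S (geo (c e.2) (c f.2) * geo (c f.2) (d f.2) * (geo (d e.2) (d f.2))⁻¹ *
        (geo (c e.2) (d e.2))⁻¹) (ch [c e.2, c f.2] + ch [d e.2, d f.2]) := by
    intro e f g h1 h2
    have q := Ar.quad hg hS (((h1.1.move [e.1])).mono hN) (h2.1.mono (by omega))
      (h2.2.mono (by omega)) ((h1.2.move [e.1]).mono hN)
    rw [← hg.symm, ← hg.symm]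
    by_cases h3 : c e.2 = c f.2
    · by_cases h4 : d e.2 = d f.2
      · rw [h3, h4, hg.refl, hg.refl, hg.symm (c f.2)]
        simpa using Ar.one _
      · exact q.mono (by simp [ch, h4])
    · exact q.mono (by simp [ch, h3])
  induction l generalizing e g with
  | nil =>
    simpa [pp] using step e e' g h.1 h.2.1
  | cons f l ih =>
    have a := ih f (g * φ (FreeGroup.mk [e.1])) h.2
    have b := step e f g h.1 h.2.1
    have := (a.conj (geo (c e.2) (c f.2))).mul b
    simp only [List.cons_append, List.map_cons, pp, ch] at this ⊢
    convert this.mono ?_ using 1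
    · group
    · omega

theorem rechunk (hg : IsGeo φ geo) {m : ℕ} (hm : 0 < m)
    (hS : ∀ w, φ w = 1 → wnorm w ≤ 2 * m → w ∈ S)
    (l : List ((ι × Bool) × β)) : ∀ (g : G) (k : ℕ) (a : G) (t : FreeGroup ι), k ≤ m →
    wnorm t ≤ m - k → a * φ t = g →
    ∃ (l' : List ((ι × Bool) × (β × G))) (n : ℕ) (t' : FreeGroup ι),
      l'.map (fun e => (e.1, e.2.1)) = l ∧ Val φ (fun g b => Near φ m g b.2) g l' ∧
      ch (a :: l'.map fun e => e.2.2) ≤ n ∧ m * n ≤ l.length + (m - k) ∧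
      wnorm t' ≤ m ∧
      (∀ e ∈ (a :: l'.map fun e => e.2.2).getLast?,
        e * φ t' = g * φ (FreeGroup.mk (l.map Prod.fst))) ∧
      Ar S (t * FreeGroup.mk (l.map Prod.fst) * t'⁻¹ *
        (pp geo (a :: l'.map fun e => e.2.2))⁻¹) n := by
  induction l with
  | nil =>
    intro g k a t hk ht hag
    refine ⟨[], 0, t, rfl, trivial, by simp [ch], by simp, by omega, ?_, ?_⟩
    · simp [← FreeGroup.one_eq_mk, hag]
    · simpa [pp, ← FreeGroup.one_eq_mk] using Ar.one _
  | cons e l ih =>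
    intro g k a t hk ht hag
    have nt : Near φ m g a := ⟨t⁻¹, by rw [wnorm_inv]; omega, by rw [← hag, map_inv]; group⟩
    have h1 : wnorm (FreeGroup.mk [e.1]) ≤ 1 := wnorm_mk_le [e.1]
    rcases Nat.eq_zero_or_pos k with rfl | hk0
    · obtain ⟨l', n, t', b1, b2, b3, b4, b5, b6, b7⟩ :=
        ih (g * φ (FreeGroup.mk [e.1])) (m - 1) g (FreeGroup.mk [e.1]) (by omega) (by omega) rfl
      refine ⟨(e.1, (e.2, g)) :: l', n + 1, t', by simp [b1], ⟨⟨1, by simp [wnorm_one], by simp⟩, b2⟩,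
        ?_, ?_, b5, ?_, ?_⟩
      · simp only [List.map_cons, ch]
        split_ifs <;> omega
      · simp only [List.length_cons]
        rw [mul_add]
        omega
      · intro e' he
        have := b6 e' (by simpa [List.getLast?_cons_cons] using he)
        rw [this, List.map_cons, mk_cons e.1 (l.map Prod.fst), map_mul, mul_assoc]
      · have : Ar S (t * (geo a g)⁻¹) 1 := by
          apply Ar.of_mem
          apply hS
          · rw [map_mul, map_inv, hg.map, ← hag]; group
          · have := wnorm_mul_le t (geo a g)⁻¹
            rw [wnorm_inv] at this
            have := hg.min a g t hag
            omega
        have := (b7.conj t).mul this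
        simp only [List.map_cons, pp]
        rw [mk_cons e.1]
        convert this using 1
        group
    · obtain ⟨l', n, t', b1, b2, b3, b4, b5, b6, b7⟩ :=
        ih (g * φ (FreeGroup.mk [e.1])) (k - 1) a (t * FreeGroup.mk [e.1]) (by omega)
          (by have := wnorm_mul_le t (FreeGroup.mk [e.1]); omega)
          (by rw [map_mul, ← mul_assoc, hag])
      refine ⟨(e.1, (e.2, a)) :: l', n, t', by simp [b1], ⟨nt, b2⟩,
        ?_, ?_, b5, ?_, ?_⟩
      · simpa [ch] using b3
      · simp only [List.length_cons]
        omega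
      · intro e' he
        have := b6 e' (by simpa [List.getLast?_cons_cons] using he)
        rw [this, List.map_cons, mk_cons e.1 (l.map Prod.fst), map_mul, mul_assoc]
      · simp only [List.map_cons, pp, hg.refl, one_mul]
        rw [mk_cons e.1, ← mul_assoc]
        exact b7

theorem rechunk_closed (hg : IsGeo φ geo) {m : ℕ} (hm : 0 < m)
    (hS : ∀ w, φ w = 1 → wnorm w ≤ 2 * m → w ∈ S)
    (l : List ((ι × Bool) × β)) (hl : φ (FreeGroup.mk (l.map Prod.fst)) = 1) (g : G) :
    ∃ (l' : List ((ι × Bool) × (β × G))) (n : ℕ),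
      l'.map (fun e => (e.1, e.2.1)) = l ∧ Val φ (fun g b => Near φ m g b.2) g l' ∧
      ch (cl (l'.map fun e => e.2.2)) ≤ 2 * n ∧ m * n ≤ l.length ∧
      Ar S (FreeGroup.mk (l.map Prod.fst) * (pp geo (cl (l'.map fun e => e.2.2)))⁻¹) (n + 1) := by
  rcases l with _ | ⟨e, l⟩
  · exact ⟨[], 0, rfl, trivial, by simp [cl, ch], by simp, by
      simpa [cl, pp, ← FreeGroup.one_eq_mk] using Ar.one _⟩
  have h1 : wnorm (FreeGroup.mk [e.1]) ≤ 1 := wnorm_mk_le [e.1]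
  obtain ⟨l', n, t', b1, b2, b3, b4, b5, b6, b7⟩ := rechunk hg hm hS l
    (g * φ (FreeGroup.mk [e.1])) (m - 1) g (FreeGroup.mk [e.1]) (by omega) (by omega) rfl
  refine ⟨(e.1, (e.2, g)) :: l', n, by simp [b1], ⟨⟨1, by simp [wnorm_one], by simp⟩, b2⟩,
    ?_, by simp only [List.length_cons]; omega, ?_⟩
  all_goals
    simp only [List.map_cons, cl] at hl ⊢
    set D := l'.map fun e => e.2.2 with hD
    obtain ⟨L, f, hL⟩ : ∃ L f, g :: D = L ++ [f] := by
      rcases List.eq_nil_or_concat (g :: D) with h | ⟨L, f, h⟩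
      · simp at h
      · exact ⟨L, f, by rw [h, List.concat_eq_append]⟩
    have e1 : g :: (D ++ [g]) = L ++ f :: [g] := by
      rw [← List.cons_append, hL]; simp
    rw [e1]
  · rw [ch_append, ← hL]
    by_cases hfg : f = g
    · simp [ch, hfg]; omega
    · have : 1 ≤ ch (g :: D) := by
        rw [hL]
        rcases L with _ | ⟨g', L⟩
        · simp at hL
          exact absurd hL.1.symm hfg
        · simp at hL
          rw [← hL.1]
          exact ch_pos fun h => hfg h.symm
      simp [ch, hfg]
      omega
  · have hf := b6 f (by rw [hL]; simp)
    rw [mk_cons e.1, map_mul] at hl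
    rw [mul_assoc, hl, mul_one] at hf
    have : Ar S (t' * (geo f g)⁻¹) 1 := by
      apply Ar.of_mem
      apply hS
      · rw [map_mul, map_inv, hg.map, ← hf]; group
      · have := wnorm_mul_le t' (geo f g)⁻¹
        rw [wnorm_inv] at this
        have := hg.min f g t' hf
        omega
    rw [pp_append, ← hL, mk_cons e.1]
    have := b7.mul (this.conj (pp geo (g :: D)))
    simp only [pp, mul_one]
    convert this using 1
    group

end Loops

section Main

variable {φ : FreeGroup ι →* G} {geo : G → G → FreeGroup ι} {S : Set (FreeGroup ι)}

/-- Number of edges flagged as belonging to the next layer. -/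
def nx (γ : List ((ι × Bool) × Bool)) : ℕ := γ.countP fun e => e.2

/-- Validity of labels. -/
def PF (φ : FreeGroup ι →* G) (b b' : ℕ) (g : G) (e : Bool × G) : Prop :=
  Near φ (if e.1 then b' else b) g e.2

/-- The main inductive predicate. -/
def Pm (φ : FreeGroup ι →* G) (geo : G → G → FreeGroup ι) (S : Set (FreeGroup ι)) (M m : ℕ)
    (γ : List ((ι × Bool) × Bool)) (A : ℕ) : Prop :=
  ∃ cst : ℕ → ℕ, m * ∑ r ∈ Finset.range m, cst r ≤ 8 * (nx γ + M * A) ∧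
    ∀ r < m, ∀ b, b + M * (r + 1) ≤ (M + 1) * m → ∀ (g : G)
      (γ' : List ((ι × Bool) × (Bool × G))), γ'.map (fun e => (e.1, e.2.1)) = γ →
      Val φ (PF φ b (b + M)) g γ' → Bd geo S (γ'.map fun e => e.2.2) (cst r)

variable {M m : ℕ}

theorem PF.near {b b' N : ℕ} {g : G} {e : Bool × G} (h : PF φ b b' g e) (h1 : b ≤ b')
    (h2 : b' ≤ N) : Near φ N g e.2 := by
  unfold PF at h
  split_ifs at h
  · exact h.mono h2
  · exact h.mono (h1.trans h2)

theorem Pm.rot {p s : List ((ι × Bool) × Bool)} {A : ℕ}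
    (hc : φ (FreeGroup.mk ((p ++ s).map Prod.fst)) = 1) (h : Pm φ geo S M m (p ++ s) A) :
    Pm φ geo S M m (s ++ p) A := by
  obtain ⟨cst, h1, h2⟩ := h
  refine ⟨cst, by simpa [nx, add_comm] using h1, ?_⟩
  intro r hr b hb g γ' hγ hv
  obtain ⟨s', p', rfl, rfl, rfl⟩ := List.map_eq_append_iff.1 hγ
  rw [Val.append_iff] at hv
  have := h2 r hr b hb (g * φ (FreeGroup.mk (s'.map Prod.fst))) (p' ++ s') (by simp) (by
    rw [Val.append_iff]
    refine ⟨hv.2, ?_⟩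
    have : g * φ (FreeGroup.mk (s'.map Prod.fst)) * φ (FreeGroup.mk (p'.map Prod.fst)) = g := by
      simp only [List.map_append, List.map_map, mk_append, map_mul, Function.comp_def] at hc
      rw [mul_assoc, mul_eq_one_comm.1 hc, mul_one]
    rw [this]
    exact hv.1)
  rw [List.map_append] at this ⊢
  exact this.rot

theorem map_fst_map {β β' : Type*} (f : β → β') (l : List ((ι × Bool) × β)) :
    (l.map fun e => (e.1, f e.2)).map Prod.fst = l.map Prod.fst := by
  simp [Function.comp_def]

theorem Pm.all_next (hg : IsGeo φ geo) (hm : 0 < m)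
    (hS : ∀ w, φ w = 1 → wnorm w ≤ 8 * ((M + 1) * m + 1) → w ∈ S)
    {γ : List ((ι × Bool) × Bool)} {A : ℕ} (hγ : ∀ e ∈ γ, e.2 = true)
    (hc : φ (FreeGroup.mk (γ.map Prod.fst)) = 1)
    (h : Pm φ geo S M m (γ.map fun e => (e.1, false)) A) : Pm φ geo S M m γ A := by
  obtain ⟨cst, h1, h2⟩ := h
  have hn0 : nx (γ.map fun e => (e.1, false)) = 0 := by
    simp [nx, List.countP_map, Function.comp_def]
  have hn : nx γ = γ.length := by
    simpa [nx, List.countP_eq_length] using hγ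
  refine ⟨fun r => if r = 0 then cst (m - 1) + 8 * (γ.length / m) else cst (r - 1), ?_, ?_⟩
  · obtain ⟨m', rfl⟩ : ∃ m', m = m' + 1 := ⟨m - 1, by omega⟩
    rw [Finset.sum_range_succ'] 
    rw [Finset.sum_range_succ] at h1
    simp only [Nat.add_sub_cancel, if_true, Nat.add_eq_zero_iff, one_ne_zero, and_false, if_false]
    rw [hn0] at h1
    rw [hn]
    have := Nat.mul_div_le γ.length (m' + 1)
    rw [← add_assoc, mul_add]
    have e : (m' + 1) * (8 * (γ.length / (m' + 1))) = 8 * ((m' + 1) * (γ.length / (m' + 1))) := by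
      ring
    rw [e]
    omega
  · intro r hr b hb g γ' hγ' hv
    have hflag : ∀ e ∈ γ', e.2.1 = true := by
      intro e he
      exact hγ (e.1, e.2.1) (hγ' ▸ List.mem_map_of_mem (f := fun e => (e.1, e.2.1)) he)
    have hbN : b + M ≤ (M + 1) * m := by
      have : M * 1 ≤ M * (r + 1) := Nat.mul_le_mul_left _ (by omega)
      omega
    have hvN : Val φ (fun g e => Near φ (b + M) g e.2) g γ' :=
      hv.mono fun g e he => he.near (by omega) le_rfl
    rcases Nat.eq_zero_or_pos r with rfl | hr0
    · simp only [if_true]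
      have hlen : γ'.length = γ.length := by rw [← hγ', List.length_map]
      have hfst : γ'.map Prod.fst = γ.map Prod.fst := by
        rw [← hγ']; simp [Function.comp_def]
      have hmM : m ≤ (M + 1) * m := Nat.le_mul_of_pos_left _ (by omega)
      obtain ⟨l', n, b1, b2, b3, b4, -⟩ := rechunk_closed (S := S) hg hm
        (fun w hw hw' => hS w hw (by omega)) γ' (by rw [hfst, hc]) g
      have hD := h2 (m - 1) (by omega) m
        (by rw [Nat.sub_add_cancel hm]; exact le_of_eq (by ring)) g
        (l'.map fun e => (e.1, (false, e.2.2))) (by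
          rw [← hγ', ← b1]; simp [Function.comp_def]) (by
          rw [Val.map_iff (f := fun x : (Bool × G) × G => (false, x.2))]
          exact b2.mono fun g e he => by simpa [PF] using he)
      rw [List.map_map] at hD
      have hCeq : γ'.map (fun e => e.2.2) = l'.map fun e => e.2.1.2 := by
        rw [← b1]; simp [Function.comp_def]
      have hvl : Val φ (fun g b => Near φ ((M + 1) * m) g b.1.2 ∧ Near φ ((M + 1) * m) g b.2)
          g l' := by
        refine Val.and ?_ (b2.mono fun g e he => he.mono hmM)
        rw [← b1, Val.map_iff (f := fun x : (Bool × G) × G => x.1)] at hvN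
        exact hvN.mono fun g e he => he.mono hbN
      have hcl : φ (FreeGroup.mk (l'.map Prod.fst)) = 1 := by
        rw [← hc, ← hfst, ← b1]; simp [Function.comp_def]
      rw [hCeq]
      rcases l' with _ | ⟨e, l'⟩
      · exact Bd.nil _
      have lad := ladder (S := S) hg hS le_rfl (c := fun x : (Bool × G) × G => x.1.2)
        (d := fun x => x.2) l' e e g (by
          rw [← List.cons_append, Val.append_iff, hcl, mul_one]
          exact ⟨hvl, hvl.1, trivial⟩)
      have hnn : n ≤ γ.length / m := (Nat.le_div_iff_mul_le hm).2 (by rw [← hlen, mul_comm]; exact b4)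
      simp only [Bd, List.map_cons, cl, Function.comp_def, List.map_append, List.map_nil] at b3 hD lad ⊢
      by_cases hq : ch (e.2.1.2 :: (l'.map (fun e => e.2.1.2) ++ [e.2.1.2])) ≤ 2
      · rw [pp_ch_two hg hq]
        exact Ar.one _
      · have := lad.mul (hD.conj (geo e.2.1.2 e.2.2))
        convert this.mono ?_ using 1
        · group
        · simp only [fc]
          omega
    · have hr1 : ¬ r = 0 := by omega
      simp only [hr1, if_false]
      have := h2 (r - 1) (by omega) (b + M) (by
        rw [Nat.sub_add_cancel hr0]
        have : M * (r + 1) = M * r + M := by ring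
        omega) g (γ'.map fun e => (e.1, (false, e.2.2))) (by
          rw [← hγ']; simp [Function.comp_def]) (by
          rw [Val.map_iff (f := fun x : Bool × G => (false, x.2))]
          exact hvN.mono fun g e he => by simpa [PF] using he)
      simpa [Function.comp_def] using this

theorem Pm.face (hg : IsGeo φ geo) 
    (hS : ∀ w, φ w = 1 → wnorm w ≤ 8 * ((M + 1) * m + 1) → w ∈ S)
    {x : ι × Bool} {t : List (ι × Bool)} {v : List ((ι × Bool) × Bool)} {A : ℕ}
    (ht : Fc φ M x t) (hc : φ (FreeGroup.mk (x :: v.map Prod.fst)) = 1)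
    (h : Pm φ geo S M m (t.map (fun y => (y, true)) ++ v) A) :
    Pm φ geo S M m ((x, false) :: v) (A + 1) := by
  obtain ⟨cst, h1, h2⟩ := h
  refine ⟨cst, h1.trans ?_, ?_⟩
  · have := ht.1
    have e1 : nx (t.map (fun y => (y, true)) ++ v) = t.length + nx v := by
      simp [nx, List.countP_map, Function.comp_def]
    have e2 : nx ((x, false) :: v) = nx v := by simp [nx]
    have e3 : M * (A + 1) = M * A + M := by ring
    rw [e1, e2, e3]
    omega
  · intro r hr b hb g γ' hγ hv
    obtain ⟨⟨x', fl, c⟩, v', rfl, hx, rfl⟩ := List.map_eq_cons_iff.1 hγ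
    simp only [Prod.mk.injEq] at hx
    obtain ⟨rfl, rfl⟩ := hx
    have hbN : b + M ≤ (M + 1) * m := by
      have : M * 1 ≤ M * (r + 1) := Nat.mul_le_mul_left _ (by omega)
      omega
    have hc0 : Near φ b g c := by simpa [PF] using hv.1
    have hvt : ∀ (t : List (ι × Bool)) (g : G) (k : ℕ), Near φ k g c → k + t.length ≤ b + M →
        Val φ (PF φ b (b + M)) g (t.map fun y => (y, (true, c))) := by
      intro t
      induction t with
      | nil => intros; trivial
      | cons y t ih =>
        intro g k hk hk'
        simp only [List.length_cons] at hk'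
        refine ⟨?_, ih _ (k + 1) (hk.move [y]) (by omega)⟩
        simp only [PF, if_true]
        exact hk.mono (by omega)
    have hfst : (t.map fun y => (y, (true, c))).map Prod.fst = t := by
      simp [Function.comp_def]
    have key := h2 r hr b hb g (t.map (fun y => (y, (true, c))) ++ v')
      (by simp [Function.comp_def]) (by
        rw [Val.append_iff, hfst, ← ht.2]
        exact ⟨hvt t g b hc0 (by have := ht.1; omega), hv.2⟩)
    simp only [List.map_append, List.map_map, Function.comp_def, List.map_const', List.map_cons]
      at key ⊢
    refine key.rep hg _ ?_
    have hvN : Val φ (fun g e => Near φ (b + M) g e.2) (g * φ (FreeGroup.mk [x'])) v' :=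
      hv.2.mono fun g e he => he.near (by omega) le_rfl
    intro d hd e he
    have hdn := (hvN.head hd).back
    have hen := hvN.last he
    have : g * φ (FreeGroup.mk [x']) * φ (FreeGroup.mk (v'.map Prod.fst)) = g := by
      rw [map_fst_map, mk_cons x', map_mul] at hc
      rw [mul_assoc, hc, mul_one]
    rw [this] at hen
    exact Ar.tri hg hS (hc0.mono (by omega)) (hdn.mono (by omega)) (hen.mono (by omega))

theorem Pm.pair (hg : IsGeo φ geo) 
    (hS : ∀ w, φ w = 1 → wnorm w ≤ 8 * ((M + 1) * m + 1) → w ∈ S)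
    {x : ι × Bool} {fl : Bool} {u v : List ((ι × Bool) × Bool)} {A B A' : ℕ}
    (hA : A + B ≤ A') (hcu : φ (FreeGroup.mk (u.map Prod.fst)) = 1)
    (hcv : φ (FreeGroup.mk (v.map Prod.fst)) = 1)
    (h : Pm φ geo S M m u A) (h' : Pm φ geo S M m v B) :
    Pm φ geo S M m ((x, false) :: (u ++ (ilet x, fl) :: v)) A' := by
  obtain ⟨cst, h1, h2⟩ := h
  obtain ⟨cst', h1', h2'⟩ := h'
  refine ⟨fun r => cst r + cst' r, ?_, ?_⟩
  · rw [Finset.sum_add_distrib, mul_add]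
    have e : nx u + nx v ≤ nx ((x, false) :: (u ++ (ilet x, fl) :: v)) := by
      simp only [nx, List.countP_cons, List.countP_append]
      omega
    have : M * (A + B) ≤ M * A' := Nat.mul_le_mul_left _ hA
    rw [mul_add] at this
    omega
  · intro r hr b hb g γ' hγ hv
    obtain ⟨⟨x', f0, c⟩, w', rfl, hx, hγ1⟩ := List.map_eq_cons_iff.1 hγ
    obtain ⟨u', w'', rfl, rfl, hγ2⟩ := List.map_eq_append_iff.1 hγ1
    obtain ⟨⟨y, f1, d⟩, v', rfl, hy, rfl⟩ := List.map_eq_cons_iff.1 hγ2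
    simp only [Prod.mk.injEq] at hx hy
    obtain ⟨rfl, rfl⟩ := hx
    obtain ⟨rfl, rfl⟩ := hy
    rw [map_fst_map] at hcu hcv
    have hbN : b + M ≤ (M + 1) * m := by
      have : M * 1 ≤ M * (r + 1) := Nat.mul_le_mul_left _ (by omega)
      omega
    obtain ⟨hv1, hv2⟩ := hv
    rw [Val.append_iff, hcu, mul_one] at hv2
    obtain ⟨hv2, hv3, hv4⟩ := hv2
    have hgg : g * φ (FreeGroup.mk [x']) * φ (FreeGroup.mk [ilet x']) = g := by
      have : FreeGroup.mk [ilet x'] = (FreeGroup.mk [x'])⁻¹ := by simp [ilet, FreeGroup.invRev]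
      rw [this, map_inv, mul_inv_cancel_right]
    dsimp only at hv1 hv2 hv3 hv4
    rw [hgg] at hv4
    have hU := h2 r hr b hb _ u' rfl hv2
    have hV := h2' r hr b hb _ v' rfl hv4
    have nc := hv1.near (N := b + M) (by omega) le_rfl
    have nd := hv3.near (N := b + M) (by omega) le_rfl
    have nc' := nc.move [x']
    have nd' := nd.move [ilet x']
    rw [hgg] at nd'
    simp only [List.length_singleton] at nc nd nc' nd'
    have hN1 : b + M + 1 ≤ (M + 1) * m + 1 := by omega
    have hN0 : b + M ≤ (M + 1) * m + 1 := by omega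
    have main : ∀ (h : G) (u' : List ((ι × Bool) × (Bool × G))) (K : ℕ) (c d : G),
        φ (FreeGroup.mk (u'.map Prod.fst)) = 1 →
        Val φ (PF φ b (b + M)) h u' → Near φ ((M + 1) * m + 1) h c →
        Near φ ((M + 1) * m + 1) h d → Bd geo S (u'.map fun e => e.2.2) K →
        Bd geo S (c :: ((u'.map fun e => e.2.2) ++ [d])) K := by
      intro h u' K c d hcu hv nc nd hB
      have hvN : Val φ (fun g e => Near φ (b + M) g e.2) h u' :=
        hv.mono fun g e he => he.near (by omega) le_rfl
      have hh : ∀ e ∈ (u'.map fun e => e.2.2).head?, Near φ ((M + 1) * m + 1) h e :=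
        fun e he => (hvN.head he).mono hN0
      have hl : ∀ e ∈ (u'.map fun e => e.2.2).getLast?, Near φ ((M + 1) * m + 1) h e := by
        intro e he
        have := (hvN.last he).mono hN1
        rwa [hcu, mul_one] at this
      have b1 : Bd geo S ([d] ++ u'.map fun e => e.2.2) K :=
        hB.del hg fun e he f hf => Ar.tri hg hS nd (hh e he) (hl f hf)
      refine b1.rot.del hg fun e he f hf => ?_
      simp at hf
      subst hf
      refine Ar.tri hg hS nc ?_ nd
      rcases u' with _ | ⟨a, u'⟩
      · simp at he
        exact he ▸ nd
      · exact hh e (by simpa using he)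
    have B1 := main _ u' _ c d hcu hv2 (nc'.mono hN1) (nd.mono hN0) hU
    have B2 := main _ v' _ d c hcv hv4 (nd'.mono hN1) (nc.mono hN0) hV
    simpa using B1.chord hg B2

theorem Pm.of_Dg (hg : IsGeo φ geo) (hm : 0 < m)
    (hS : ∀ w, φ w = 1 → wnorm w ≤ 8 * ((M + 1) * m + 1) → w ∈ S) (N : ℕ) :
    ∀ (γ : List ((ι × Bool) × Bool)) (A : ℕ), A * (4 * M + 4) + 2 * γ.length + nx γ ≤ N →
    Dg φ M (γ.map Prod.fst) A → Pm φ geo S M m γ A := by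
  induction N using Nat.strong_induction_on with
  | _ N ih =>
  intro γ A hN hD
  by_cases hγ : ∀ e ∈ γ, e.2 = true
  · rcases γ with _ | ⟨e, γ⟩
    · refine ⟨fun _ => 0, by simp, ?_⟩
      intro r hr b hb g γ' hγ' _
      rw [List.map_eq_nil_iff] at hγ'
      subst hγ'
      exact Bd.nil _
    · apply Pm.all_next hg hm hS hγ hD.closed
      have e1 : nx ((e :: γ).map fun e => (e.1, false)) = 0 := by
        simp [nx, List.countP_map, Function.comp_def]
      have e2 : 1 ≤ nx (e :: γ) := by
        have := hγ e (by simp)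
        simp [nx, this]
      refine ih (A * (4 * M + 4) + 2 * (e :: γ).length) (by omega) _ A ?_ ?_
      · rw [e1, List.length_map]; omega
      · simpa [Function.comp_def] using hD
  · push Not at hγ
    obtain ⟨⟨x, fl⟩, he, hfl⟩ := hγ
    have hfl : fl = false := by simpa using hfl
    subst hfl
    obtain ⟨p, s, rfl⟩ := List.append_of_mem he
    have hcl := hD.closed
    rw [List.map_append, List.map_cons] at hD
    have hcl2 : φ (FreeGroup.mk ((((x, false) :: s) ++ p).map Prod.fst)) = 1 := by
      have := hD.rot.closed
      simpa using this
    apply Pm.rot (p := (x, false) :: s) (s := p) hcl2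
    have hnx : nx (p ++ (x, false) :: s) = nx (s ++ p) := by
      simp [nx, add_comm]
    have hlen : (p ++ (x, false) :: s).length = (s ++ p).length + 1 := by
      simp; omega
    rw [hnx, hlen] at hN
    have hG := Dg.consis φ M _ _ _ _ hD
    rw [← List.map_append] at hG
    rw [List.cons_append] at hcl2 ⊢
    generalize s ++ p = v at hN hG hcl2
    rcases hG with ⟨u, v', A1, A2, h1, h2, h3, h4⟩ | ⟨t, A', rfl, ht, h3⟩
    · obtain ⟨u, w, rfl, rfl, hw⟩ := List.map_eq_append_iff.1 h1
      obtain ⟨⟨y, fl⟩, v', rfl, hy, rfl⟩ := List.map_eq_cons_iff.1 hw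
      simp only at hy
      subst hy
      have k1 : A1 * (4 * M + 4) ≤ A * (4 * M + 4) := Nat.mul_le_mul_right _ (by omega)
      have k2 : A2 * (4 * M + 4) ≤ A * (4 * M + 4) := Nat.mul_le_mul_right _ (by omega)
      have e : nx u + nx v' ≤ nx (u ++ (ilet x, fl) :: v') := by
        simp only [nx, List.countP_cons, List.countP_append]
        omega
      simp only [List.length_append, List.length_cons] at hN
      exact Pm.pair hg hS h2 h3.closed h4.closed
        (ih (N - 1) (by omega) u A1 (by omega) h3) (ih (N - 1) (by omega) v' A2 (by omega) h4)
    · apply Pm.face hg hS ht (by simpa using hcl2)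
      have e1 : nx (t.map (fun y => (y, true)) ++ v) = t.length + nx v := by
        simp [nx, List.countP_map, Function.comp_def]
      have := ht.1
      rw [add_mul] at hN
      refine ih (N - 1) (by omega) _ A' ?_ (by simpa [Function.comp_def] using h3)
      rw [e1, List.length_append, List.length_map]
      omega

/-- The main upper bound. -/
theorem area_bound (hφ : Surjective φ) (hm : 0 < m)
    (hS : ∀ w, φ w = 1 → wnorm w ≤ 8 * ((M + 1) * m + 1) → w ∈ S)
    {l : List (ι × Bool)} {A : ℕ} (h : Dg φ M l A) :
    ∃ n K, m * n ≤ l.length ∧ m * (m * K) ≤ 8 * (M * A) ∧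
      Ar S (FreeGroup.mk l) (7 * n + 1 + K) := by
  obtain ⟨geo, hg⟩ := exists_geo φ hφ
  have hmM : m ≤ (M + 1) * m := Nat.le_mul_of_pos_left _ (by omega)
  obtain ⟨cst, h1, h2⟩ := Pm.of_Dg hg hm hS _ (l.map fun y => (y, false)) A le_rfl
    (by simpa [Function.comp_def] using h)
  have e1 : nx (l.map fun y => (y, false)) = 0 := by
    simp [nx, List.countP_map, Function.comp_def]
  rw [e1, zero_add] at h1
  obtain ⟨r, hr, hr'⟩ : ∃ r < m, m * cst r ≤ ∑ r ∈ Finset.range m, cst r := by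
    by_contra hcon
    push Not at hcon
    have hlt : ∑ r ∈ Finset.range m, ∑ s ∈ Finset.range m, cst s <
        ∑ r ∈ Finset.range m, m * cst r :=
      Finset.sum_lt_sum_of_nonempty ⟨0, by simpa using hm⟩
        fun r hr => hcon r (by simpa using hr)
    rw [Finset.sum_const, Finset.card_range, smul_eq_mul, ← Finset.mul_sum] at hlt
    exact lt_irrefl _ hlt
  obtain ⟨l', n, b1, b2, b3, b4, b5⟩ := rechunk_closed (S := S) hg hm
    (fun w hw hw' => hS w hw (by omega)) (l.map fun y => (y, false))
    (by simpa [Function.comp_def] using h.closed) 1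
  have hD := h2 r hr m (by
    have : M * (r + 1) ≤ M * m := Nat.mul_le_mul_left _ hr
    have e : (M + 1) * m = M * m + m := by ring
    omega) 1 l' b1 (b2.mono fun g e he => by
      unfold PF
      split_ifs
      · exact he.mono (by omega)
      · exact he)
  refine ⟨n, cst r, by simpa using b4, (Nat.mul_le_mul_left _ hr').trans h1, ?_⟩
  have := b5.mul hD
  simp only [List.map_map, Function.comp_def, List.map_id', inv_mul_cancel_right] at this
  refine this.mono ?_
  simp only [fc]
  omega

end Main

section Final

variable {φ : FreeGroup ι →* G} {S R : Set (FreeGroup ι)}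

theorem Ar.inv {w : FreeGroup ι} {k : ℕ} (h : Ar S w k) : Ar S w⁻¹ k := by
  obtain ⟨_, hl, L, rfl, h1, h2⟩ := h
  refine ⟨_, hl, (L.map fun p => (p.1, p.2⁻¹)).reverse, by simp, ?_, ?_⟩
  · intro p hp
    rw [List.mem_reverse] at hp
    obtain ⟨q, hq, rfl⟩ := List.mem_map.1 hp
    rcases h1 q hq with h | h
    · exact Or.inr (by simpa using h)
    · exact Or.inl h
  · rw [h2]
    clear h1 h2 hl
    induction L with
    | nil => simp
    | cons p L ih =>
      simp only [List.map_cons, List.prod_cons, List.reverse_cons, List.map_append,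
        List.prod_append, mul_inv_rev, List.map_nil, List.prod_nil, mul_one, ih]
      group

theorem Ar.exists {w : FreeGroup ι} (hw : w ∈ Subgroup.normalClosure R) : ∃ k, Ar R w k := by
  let H : Subgroup (FreeGroup ι) :=
    { carrier := {w | ∃ k, Ar R w k}
      mul_mem' := by
        rintro a b ⟨k, hk⟩ ⟨k', hk'⟩
        exact ⟨_, hk.mul hk'⟩
      one_mem' := ⟨0, Ar.one _⟩
      inv_mem' := by
        rintro a ⟨k, hk⟩
        exact ⟨_, hk.inv⟩ }
  have hn : H.Normal := ⟨fun n ⟨k, hk⟩ g => ⟨k, hk.conj g⟩⟩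
  have : Subgroup.normalClosure R ≤ H :=
    Subgroup.normalClosure_le_normal fun r hr => ⟨1, Ar.of_mem hr⟩
  exact this hw

theorem Ar.area_le {w : FreeGroup ι} {k : ℕ} (h : Ar S w k) : area S w ≤ k := by
  obtain ⟨l, hl, h⟩ := h
  exact (Nat.sInf_le h).trans hl

theorem areaLe_area {w : FreeGroup ι} (hw : w ∈ Subgroup.normalClosure R) :
    AreaLe R w (area R w) := by
  obtain ⟨k, l, -, h⟩ := Ar.exists hw
  exact Nat.sInf_mem (s := {l | AreaLe R w l}) ⟨l, h⟩

theorem Ar.comp {w : FreeGroup ι} {l k : ℕ} (h : AreaLe S w l) (hS : ∀ s ∈ S, Ar R s k) :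
    Ar R w (l * k) := by
  obtain ⟨L, rfl, h1, rfl⟩ := h
  induction L with
  | nil => simpa using Ar.one _
  | cons p L ih =>
    have a := ih fun q hq => h1 q (by simp [hq])
    have b : Ar R p.2 k := by
      rcases h1 p (by simp) with h | h
      · exact hS _ h
      · simpa using (hS _ h).inv
    have c := (b.conj p.1⁻¹).mul a
    simp only [inv_inv] at c
    simp only [List.map_cons, List.prod_cons, List.length_cons]
    exact c.mono (le_of_eq (by ring))

theorem ball_finite {a : ℕ} (n : ℕ) : {w : FreeGroup (Fin a) | wnorm w ≤ n}.Finite := by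
  refine ((List.finite_length_le (Fin a × Bool) n).image FreeGroup.mk).subset ?_
  intro w hw
  obtain ⟨l, h1, h2⟩ := exists_word w
  exact ⟨l, by simp only [Set.mem_setOf_eq] at hw ⊢; omega, h1⟩

theorem bdd_area {a : ℕ} (S : Set (FreeGroup (Fin a))) (H : Set (FreeGroup (Fin a))) (n : ℕ) :
    BddAbove (area S '' {w | w ∈ H ∧ wnorm w ≤ n}) :=
  (((ball_finite n).subset fun _ hw => hw.2).image _).bddAbove

end Final

/-- A finitely presented group with quadratic Dehn function has
isoperimetric spectrum equivalent to `(n/m)²`. -/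
theorem isoSpec_of_quadratic_dehn {G : Type} [Group G] {a : ℕ}
    (φ : FreeGroup (Fin a) →* G) (hφ : Surjective φ)
    (R : Set (FreeGroup (Fin a))) (hR : R.Finite)
    (hker : φ.ker = Subgroup.normalClosure R)
    (C : ℕ) (hC : 0 < C)
    (hupper : ∀ n : ℕ, 0 < n → (dehn R n : ℝ) ≤ C * (n : ℝ) ^ 2)
    (hlower : ∀ n : ℕ, 0 < n → (n : ℝ) ^ 2 ≤ C * (dehn R (C * n) : ℝ) + C * n) :
    SpecEquiv (isoSpecR φ) (fun _ m n => ((n : ℝ) / m) ^ 2) := by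
  classical
  obtain ⟨M, hM⟩ : ∃ M, ∀ r ∈ R, wnorm r ≤ M + 1 := by
    obtain ⟨M, hM⟩ := (hR.image wnorm).bddAbove
    exact ⟨M, fun r hr => (hM (Set.mem_image_of_mem _ hr)).trans (by omega)⟩
  have hRφ : ∀ r ∈ R, φ r = 1 := fun r hr => by
    have : r ∈ φ.ker := hker ▸ Subgroup.subset_normalClosure hr
    exact this
  have hmemR : ∀ w, φ w = 1 → w ∈ Subgroup.normalClosure R := fun w hw => by
    rw [← hker]; exact hw
  have hdehn : ∀ w n, φ w = 1 → 0 < n → wnorm w ≤ n → area R w ≤ C * n ^ 2 := by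
    intro w n hw hn hwn
    have h1 : area R w ≤ dehn R n :=
      le_csSup (bdd_area R (Subgroup.normalClosure R) n) ⟨w, ⟨hmemR w hw, hwn⟩, rfl⟩
    have h2 : dehn R n ≤ C * n ^ 2 := by exact_mod_cast hupper n hn
    exact h1.trans h2
  have htriv : ∀ k w, w ∈ Subgroup.normalClosure (triv φ k) → φ w = 1 := by
    intro k w hw
    have : Subgroup.normalClosure (triv φ k) ≤ φ.ker :=
      Subgroup.normalClosure_le_normal fun r hr => hr.2
    exact this hw
  constructor
  · set K := 8 * (M + 2) + 8 * M * C + 7 with hK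
    refine ⟨K, by omega, ?_⟩
    intro k m n hk hm hn hkm
    have hm' : (0 : ℝ) < m := by exact_mod_cast hm
    have hn' : (0 : ℝ) < n := by exact_mod_cast hn
    have hK1 : (1 : ℝ) ≤ K := by
      have : 1 ≤ K := by omega
      exact_mod_cast this
    have hK7 : (7 : ℝ) ≤ K := by
      have : 7 ≤ K := by omega
      exact_mod_cast this
    have hKM : (8 * M * C : ℝ) ≤ K := by
      have : 8 * M * C ≤ K := by omega
      exact_mod_cast this
    set B : ℝ := K * (((K * n : ℕ) : ℝ) / m) ^ 2 + K * (n : ℝ) / m + K with hB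
    have hB0 : 0 ≤ B := by positivity
    change ((isoSpec φ k (K * m) n : ℕ) : ℝ) ≤ B
    rw [← Nat.le_floor_iff hB0]
    apply csSup_le'
    rintro _ ⟨w, ⟨hw, hwn⟩, rfl⟩
    rw [Nat.le_floor_iff hB0]
    have hφw := htriv k w hw
    obtain ⟨l, hl1, hl2⟩ := exists_word w
    have hD : Dg φ M l (area R w) :=
      Dg.of_area (fun r hr => ⟨hM r hr, hRφ r hr⟩) (areaLe_area (hmemR w hφw)) hl1
    obtain ⟨n', K', h1, h2, h3⟩ := area_bound (S := triv φ (K * m)) hφ hm (by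
      intro v hv hv'
      refine ⟨hv'.trans ?_, hv⟩
      have : 8 * (M + 2) * m ≤ K * m := Nat.mul_le_mul_right _ (by omega)
      have e : 8 * (M + 2) * m = 8 * ((M + 1) * m) + 8 * m := by ring
      omega) hD
    rw [hl1] at h3
    have h4 := h3.area_le
    have h5 := hdehn w n hφw hn hwn
    have h6 : m * n' ≤ n := by omega
    have h7 : m * (m * K') ≤ 8 * M * C * n ^ 2 := by
      refine h2.trans ?_
      calc 8 * (M * area R w) ≤ 8 * (M * (C * n ^ 2)) := by gcongr
        _ = _ := by ring
    have r4 : (area (triv φ (K * m)) w : ℝ) ≤ 7 * n' + 1 + K' := by exact_mod_cast h4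
    have r6 : (n' : ℝ) ≤ n / m := by
      rw [le_div_iff₀ hm', mul_comm]; exact_mod_cast h6
    have r7 : (K' : ℝ) ≤ 8 * M * C * (n / m : ℝ) ^ 2 := by
      rw [div_pow, ← mul_div_assoc, le_div_iff₀ (by positivity)]
      have : (m * (m * K') : ℝ) ≤ 8 * M * C * n ^ 2 := by exact_mod_cast h7
      linarith
    refine r4.trans ?_
    rw [hB]
    push_cast
    have s1 : (n / m : ℝ) ^ 2 ≤ (K * n / m : ℝ) ^ 2 := by
      gcongr
      nlinarith
    have s2 : (8 * M * C : ℝ) * (n / m : ℝ) ^ 2 ≤ K * (K * n / m : ℝ) ^ 2 :=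
      mul_le_mul hKM s1 (by positivity) (by positivity)
    have s3 : (7 : ℝ) * (n / m) ≤ K * n / m := by
      rw [mul_div_assoc]
      gcongr
    linarith
  · set K := C * C + C + M + 1 with hK
    refine ⟨K, by omega, ?_⟩
    intro k m n hk hm hn hkm
    have hm' : (1 : ℝ) ≤ m := by exact_mod_cast hm
    have hn' : (0 : ℝ) < n := by exact_mod_cast hn
    have hK1 : (1 : ℝ) ≤ K := by
      have : 1 ≤ K := by omega
      exact_mod_cast this
    have hKC : (C : ℝ) ≤ K := by
      have : C ≤ K := by omega
      exact_mod_cast this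
    have hKCC : (C * C : ℝ) ≤ K := by
      have : C * C ≤ K := by omega
      exact_mod_cast this
    obtain ⟨w, ⟨hw, hwn⟩, hwd⟩ := Nat.sSup_mem
      (s := area R '' {w | w ∈ Subgroup.normalClosure R ∧ wnorm w ≤ C * n})
      ⟨_, 1, ⟨one_mem _, by simp [wnorm_one]⟩, rfl⟩
      (bdd_area R (Subgroup.normalClosure R) (C * n))
    change area R w = dehn R (C * n) at hwd
    have hMk : M + 1 ≤ K * k := by
      have : K * 1 ≤ K * k := Nat.mul_le_mul_left _ hk
      omega
    have hsub : ∀ j, M + 1 ≤ j → R ⊆ triv φ j := fun j hj r hr =>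
      ⟨(hM r hr).trans hj, hRφ r hr⟩
    have h1 : area (triv φ m) w ≤ isoSpec φ (K * k) m (K * n) := by
      refine le_csSup (bdd_area (triv φ m) (Subgroup.normalClosure (triv φ (K * k))) (K * n))
        ⟨w, ⟨Subgroup.normalClosure_mono (hsub _ hMk) hw, hwn.trans ?_⟩, rfl⟩
      exact Nat.mul_le_mul_right _ (by omega)
    have h2 := areaLe_area (Subgroup.normalClosure_mono (hsub m (hMk.trans hkm)) hw)
    have h3 : area R w ≤ area (triv φ m) w * (C * m ^ 2) := by
      refine (Ar.comp h2 ?_).area_le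
      intro s hs
      exact ⟨_, hdehn s m hs.2 hm hs.1, areaLe_area (hmemR s hs.2)⟩
    have h4 : dehn R (C * n) ≤ isoSpec φ (K * k) m (K * n) * (C * m ^ 2) := by
      rw [← hwd]
      exact h3.trans (Nat.mul_le_mul_right _ h1)
    change ((n : ℝ) / ((K * m : ℕ) : ℝ)) ^ 2 ≤
      K * ((isoSpec φ (K * k) m (K * n) : ℕ) : ℝ) + K * (n : ℝ) / m + K
    set I := isoSpec φ (K * k) m (K * n)
    have r4 : (dehn R (C * n) : ℝ) ≤ I * (C * m ^ 2) := by exact_mod_cast h4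
    have hI : (0 : ℝ) ≤ I := by positivity
    have r5 : (n : ℝ) ^ 2 ≤ C * (I * (C * m ^ 2)) + C * n := by
      refine (hlower n hn).trans ?_
      gcongr
    push_cast
    have t1 : ((n : ℝ) / (K * m)) ^ 2 ≤ ((n : ℝ) / m) ^ 2 := by
      gcongr
      nlinarith
    have t2 : ((n : ℝ) / m) ^ 2 ≤ C * C * I + C * n / m := by
      rw [div_pow, div_le_iff₀ (by positivity)]
      have e : (C * C * I + C * n / m) * (m : ℝ) ^ 2 = C * (I * (C * m ^ 2)) + C * n * m := by
        field_simp
      rw [e]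
      have : (C * n : ℝ) * 1 ≤ C * n * m := by gcongr
      linarith
    have t3 : (C * C : ℝ) * I ≤ K * I := by gcongr
    have t4 : (C * n / m : ℝ) ≤ K * n / m := by gcongr
    linarith

end IsoSpecPaper
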